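/- Assume 0 < η_i < 1/‖A_i‖² for i = 1, …, p and let x† denote the x₀-minimal norm solution of A x = y. Suppose that for each δ > 0 a stopping index n_δ is chosen such that n_δ → ∞ and δ² n_δ → 0 as δ → 0. Then, for any family of noisy data y^δ with ‖y_i^δ − y_i‖ ≤ δ_i and δ = (δ_1² + ⋯ + δ_p²)^{1/2}, the stochastic heavy ball iterates satisfy E[‖x_{n_δ}^δ − x†‖²] → 0 as δ → 0. -/

import Mathlib

open Filter Topology

/-- Expectation with respect to the first `m` i.i.d. uniformly distributed indices:
for a quantity `f` determined by the coordinates `i_0, …, i_{m-1}` of the sample path,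
`avg p hp m f = p^{-m} ∑_{(i_0,…,i_{m-1}) ∈ {1,…,p}^m} f`. -/
noncomputable def avg (p : ℕ) (hp : 0 < p) (m : ℕ) (f : (ℕ → Fin p) → ℝ) : ℝ :=
  (∑ σ : Fin m → Fin p, f (fun k => if h : k < m then σ ⟨k, h⟩ else ⟨0, hp⟩)) / (p : ℝ) ^ m

/-!
With `B i = √(η i) • A i`, the error `e n = x n - x†` is a heavy ball iterate for the system
`B i e = ξ i`, whose right-hand side is the scaled noise. The extrapolated sequence
`w n = e n + n (e n - e (n - 1))` takes unit gradient steps and has `e n` as its running mean.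
Since `‖B i‖ < 1`, the expectation of `‖w n‖² + n ρ (e (n - 1))`, with `ρ` the mean squared
residual, grows per step by at most a multiple of the mean squared noise. Averaging `w` gives
stability: `E ‖e n‖² ≤ ‖e 0‖² + C n δ²`. Without noise it shows moreover that the expected
residuals `a n = E ρ (e n)` are summable and at most `‖e 0‖² / (n + 1)`.

If `e 0` satisfies the source condition `|⟪e 0, h⟫| ≤ R √(ρ h)`, then `e n` satisfies it with the
random constant `R + p ∑ k < n, √(ρ (e k))`. Taking `h = e n` and applying Cauchy-Schwarz yields
`E ‖e n‖² ≤ (R + p ∑ k < n, √(a k)) √(a n)`, which is `o(√n) · O(1/√n)`. By minimality of `x†` the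
start `x₀ - x†` is orthogonal to the common kernel, hence a limit of source elements, and stability
controls both the remainder and the noise.
-/

section Average

open scoped BigOperators

variable {p : ℕ} {hp : 0 < p} {m : ℕ} {f g : (ℕ → Fin p) → ℝ}

theorem avg_zero (f : (ℕ → Fin p) → ℝ) : avg p hp 0 f = f fun _ => ⟨0, hp⟩ := by
  simp [avg]

theorem avg_eq_expect (f : (ℕ → Fin p) → ℝ) :
    avg p hp m f
      = 𝔼 σ : Fin m → Fin p, f fun k => if h : k < m then σ ⟨k, h⟩ else ⟨0, hp⟩ := by
  simp [avg, Fintype.expect_eq_sum_div_card]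

theorem avg_add (f g : (ℕ → Fin p) → ℝ) :
    avg p hp m (fun ω => f ω + g ω) = avg p hp m f + avg p hp m g := by
  simp only [avg_eq_expect, Finset.expect_add_distrib]

theorem avg_const_mul (c : ℝ) (f : (ℕ → Fin p) → ℝ) :
    avg p hp m (fun ω => c * f ω) = c * avg p hp m f := by
  simp only [avg_eq_expect, Finset.mul_expect]

theorem avg_const (c : ℝ) : avg p hp m (fun _ => c) = c := by
  have : Nonempty (Fin p) := ⟨⟨0, hp⟩⟩
  rw [avg_eq_expect, Fintype.expect_const]

theorem avg_sum {κ : Type*} (s : Finset κ) (f : κ → (ℕ → Fin p) → ℝ) :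
    avg p hp m (fun ω => ∑ k ∈ s, f k ω) = ∑ k ∈ s, avg p hp m (f k) := by
  simp only [avg_eq_expect, Finset.expect_sum_comm]

theorem avg_mono (h : ∀ ω, f ω ≤ g ω) : avg p hp m f ≤ avg p hp m g := by
  simp only [avg_eq_expect]
  exact Finset.expect_le_expect fun _ _ => h _

theorem avg_nonneg (h : ∀ ω, 0 ≤ f ω) : 0 ≤ avg p hp m f := by
  rw [avg_eq_expect]
  exact Finset.expect_nonneg fun _ _ => h _

theorem avg_sqrt_mul_sqrt_le (hf : ∀ ω, 0 ≤ f ω) (hg : ∀ ω, 0 ≤ g ω) :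
    avg p hp m (fun ω => √(f ω) * √(g ω)) ≤ √(avg p hp m f) * √(avg p hp m g) := by
  rw [← Real.sqrt_mul (avg_nonneg hf)]
  refine Real.le_sqrt_of_sq_le ?_
  simpa only [avg_eq_expect, Real.sq_sqrt (hf _), Real.sq_sqrt (hg _)] using
    Finset.expect_mul_sq_le_sq_mul_sq Finset.univ (fun σ : Fin m → Fin p =>
      √(f fun k => if h : k < m then σ ⟨k, h⟩ else ⟨0, hp⟩)) fun σ =>
      √(g fun k => if h : k < m then σ ⟨k, h⟩ else ⟨0, hp⟩)

theorem avg_sqrt_le (hf : ∀ ω, 0 ≤ f ω) : avg p hp m (fun ω => √(f ω)) ≤ √(avg p hp m f) := by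
  simpa [avg_const] using avg_sqrt_mul_sqrt_le (hp := hp) (m := m) hf fun _ => zero_le_one (α := ℝ)

theorem avg_succ (f : (ℕ → Fin p) → ℝ) :
    avg p hp (m + 1) f = avg p hp m fun ω => 𝔼 i, f (Function.update ω m i) := by
  simp only [avg_eq_expect]
  rw [Finset.expect_comm, ← Finset.expect_product']
  refine (Fintype.expect_equiv (Fin.snocEquiv fun _ : Fin (m + 1) => Fin p) _ _ ?_).symm
  rintro ⟨i, σ⟩
  congr 1
  funext k
  rcases lt_trichotomy k m with h | rfl | h
  · simp [Fin.snocEquiv, Fin.snoc, h, h.ne, Nat.lt_succ_of_lt h]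
  · simp [Fin.snocEquiv, Fin.snoc]
  · simp [h.ne', h.not_gt, Nat.not_lt.2 (Nat.succ_le_of_lt h)]

theorem avg_eq_of_dependsOn (hf : DependsOn f (Set.Iio m)) {n : ℕ} (hmn : m ≤ n) :
    avg p hp n f = avg p hp m f := by
  have : Nonempty (Fin p) := ⟨⟨0, hp⟩⟩
  induction n, hmn using Nat.le_induction with
  | base => rfl
  | succ n hmn ih =>
    have hupdate (ω : ℕ → Fin p) (i : Fin p) : f (Function.update ω n i) = f ω :=
      hf fun k (hk : k < m) => Function.update_of_ne (hk.trans_le hmn).ne _ _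
    simp only [avg_succ, hupdate, Fintype.expect_const, ih]

end Average

section HeavyBall

variable {ι X : Type*} [AddCommGroup X] [Module ℝ X]

/-- The heavy ball iteration with step size `1 / (n + 2)` and momentum parameter `n / (n + 2)`,
moving along the direction `g (ω n)` in step `n`; the convention `x₋₁ = x₀` is expressed by the
truncated subtraction `0 - 1 = 0`. -/
noncomputable def heavyBall (g : ι → X → X) (x₀ : X) (ω : ℕ → ι) : ℕ → X
  | 0 => x₀
  | n + 1 => heavyBall g x₀ ω n - ((n : ℝ) + 2)⁻¹ • g (ω n) (heavyBall g x₀ ω n)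
      + ((n : ℝ) / ((n : ℝ) + 2)) • (heavyBall g x₀ ω n - heavyBall g x₀ ω (n - 1))

/-- The extrapolated sequence `x_n + n (x_n - x_{n-1})` of the heavy ball iteration: it takes plain
unit gradient steps, and `x_n` is its running mean. -/
noncomputable def heavyBallExtrapolation (g : ι → X → X) (x₀ : X) (ω : ℕ → ι) (n : ℕ) : X :=
  heavyBall g x₀ ω n + (n : ℝ) • (heavyBall g x₀ ω n - heavyBall g x₀ ω (n - 1))

variable (g : ι → X → X) (x₀ : X) (ω : ℕ → ι)

theorem heavyBallExtrapolation_zero : heavyBallExtrapolation g x₀ ω 0 = x₀ := by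
  simp [heavyBallExtrapolation, heavyBall]

theorem heavyBallExtrapolation_succ (n : ℕ) :
    heavyBallExtrapolation g x₀ ω (n + 1)
      = heavyBallExtrapolation g x₀ ω n - g (ω n) (heavyBall g x₀ ω n) := by
  simp only [heavyBallExtrapolation, heavyBall, Nat.add_sub_cancel]
  push_cast
  match_scalars <;> field

theorem heavyBall_succ_eq_convexComb (n : ℕ) :
    heavyBall g x₀ ω (n + 1) = (((n : ℝ) + 1) / ((n : ℝ) + 2)) • heavyBall g x₀ ω n
      + (1 / ((n : ℝ) + 2)) • heavyBallExtrapolation g x₀ ω (n + 1) := by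
  simp only [heavyBallExtrapolation, Nat.add_sub_cancel]
  push_cast
  match_scalars <;> field

variable {g ω}

theorem eq_heavyBall {x : ℕ → X}
    (hx : ∀ n : ℕ, x (n + 1) = x n - ((n : ℝ) + 2)⁻¹ • g (ω n) (x n)
      + ((n : ℝ) / ((n : ℝ) + 2)) • (x n - x (n - 1))) (n : ℕ) :
    x n = heavyBall g (x 0) ω n := by
  induction n using Nat.strong_induction_on with
  | _ n ih =>
    cases n with
    | zero => rw [heavyBall]
    | succ n => rw [heavyBall, hx, ih n (by lia), ih (n - 1) (by lia)]

theorem heavyBall_add {g₁ g₂ : ι → X → X} (hg : ∀ i x y, g i (x + y) = g₁ i x + g₂ i y)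
    (x y : X) (n : ℕ) :
    heavyBall g (x + y) ω n = heavyBall g₁ x ω n + heavyBall g₂ y ω n := by
  have hrec := eq_heavyBall (g := g) (ω := ω)
    (x := fun n => heavyBall g₁ x ω n + heavyBall g₂ y ω n) (fun n => by
      simp only [heavyBall, hg]
      module) n
  simpa only [heavyBall] using hrec.symm

variable (g)

theorem dependsOn_heavyBall (n : ℕ) : DependsOn (fun ω => heavyBall g x₀ ω n) (Set.Iio n) := by
  induction n using Nat.strong_induction_on with
  | _ n ih =>
    cases n with
    | zero => intro ω ω' _; simp only [heavyBall]
    | succ n =>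
      intro ω ω' h
      have hprev {k : ℕ} (hk : k ≤ n) : heavyBall g x₀ ω k = heavyBall g x₀ ω' k :=
        ih k (Nat.lt_succ_of_le hk) fun j (hj : j < k) => h j (by simp only [Set.mem_Iio]; lia)
      simp only [heavyBall, hprev le_rfl, hprev (Nat.sub_le n 1), h n n.lt_succ_self]

theorem heavyBall_update_of_le (ω : ℕ → ι) {k n : ℕ} (hk : k ≤ n) (i : ι) :
    heavyBall g x₀ (Function.update ω n i) k = heavyBall g x₀ ω k :=
  dependsOn_heavyBall g x₀ k fun _ (hj : _ < k) => Function.update_of_ne (hj.trans_le hk).ne _ _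

theorem avg_comp_heavyBall_of_le {p : ℕ} {hp : 0 < p} (g : Fin p → X → X) (Φ : X → ℝ) {k n : ℕ}
    (hk : k ≤ n) :
    avg p hp n (fun ω => Φ (heavyBall g x₀ ω k)) = avg p hp k fun ω => Φ (heavyBall g x₀ ω k) :=
  avg_eq_of_dependsOn (fun _ _ h => congrArg Φ (dependsOn_heavyBall g x₀ k h)) hk

end HeavyBall

theorem tendsto_sum_sqrt_div_sqrt_atTop {a : ℕ → ℝ} (ha : ∀ k, 0 ≤ a k) (hsum : Summable a) :
    Tendsto (fun n : ℕ => (∑ k ∈ Finset.range n, √(a k)) / √n) atTop (𝓝 0) := by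
  refine (Metric.tendsto_nhds.2 fun ε hε => ?_)
  obtain ⟨N, hN⟩ := ((tendsto_sum_nat_add a).eventually_lt_const
    (by positivity : 0 < (ε / 2) ^ 2)).exists
  have htail (n : ℕ) : ∑ k ∈ Finset.Ico N n, √(a k) ≤ √n * (ε / 2) := by
    have hcard : ((n - N : ℕ) : ℝ) ≤ n := mod_cast Nat.sub_le n N
    have hsumtail : ∑ k ∈ Finset.Ico N n, a k ≤ (ε / 2) ^ 2 := by
      rw [Finset.sum_Ico_eq_sum_range]
      simp only [add_comm N]
      exact (((summable_nat_add_iff N).2 hsum).sum_le_tsum _ fun k _ => ha _).trans hN.le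
    calc ∑ k ∈ Finset.Ico N n, √(a k)
        ≤ √((n - N : ℕ) : ℝ) * √(∑ k ∈ Finset.Ico N n, a k) := by
          simpa using Real.sum_sqrt_mul_sqrt_le (Finset.Ico N n) (fun _ => zero_le_one) ha
      _ ≤ √n * √((ε / 2) ^ 2) := by gcongr
      _ = √n * (ε / 2) := by rw [Real.sqrt_sq (by positivity)]
  have hhead : Tendsto (fun n : ℕ => (∑ k ∈ Finset.range N, √(a k)) / √n) atTop (𝓝 0) :=
    tendsto_const_nhds.div_atTop (Real.tendsto_sqrt_atTop.comp tendsto_natCast_atTop_atTop)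
  filter_upwards [hhead.eventually_lt_const (half_pos hε), eventually_ge_atTop N,
    eventually_gt_atTop 0] with n hheadn hNn hn
  rw [Real.dist_0_eq_abs, abs_of_nonneg (by positivity), ← Finset.sum_range_add_sum_Ico _ hNn,
    add_div]
  have htailn : (∑ k ∈ Finset.Ico N n, √(a k)) / √n ≤ ε / 2 :=
    (div_le_iff₀' (by positivity)).2 (htail n)
  linarith

section LeastSquares

open scoped BigOperators RealInnerProductSpace

variable {ι X Z : Type*} [NormedAddCommGroup X] [InnerProductSpace ℝ X]
  [NormedAddCommGroup Z] [InnerProductSpace ℝ Z]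
  {Y : ι → Type*} [∀ i, NormedAddCommGroup (Y i)] [∀ i, InnerProductSpace ℝ (Y i)]

section Residual

variable [Fintype ι]

/-- The mean squared residual of the system `B i e = ξ i`. -/
noncomputable def meanResidualSq (B : ∀ i, X →L[ℝ] Y i) (ξ : ∀ i, Y i) (e : X) : ℝ :=
  𝔼 i, ‖B i e - ξ i‖ ^ 2

variable (B : ∀ i, X →L[ℝ] Y i) (ξ : ∀ i, Y i) (e : X)

theorem meanResidualSq_nonneg : 0 ≤ meanResidualSq B ξ e :=
  Finset.expect_nonneg fun _ _ => sq_nonneg _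

theorem norm_apply_sq_le_card_mul_meanResidualSq (i : ι) :
    ‖B i e‖ ^ 2 ≤ Fintype.card ι * meanResidualSq B 0 e := by
  simpa [meanResidualSq, Fintype.card_mul_expect] using
    Finset.single_le_sum (f := fun i => ‖B i e‖ ^ 2) (fun _ _ => sq_nonneg _) (Finset.mem_univ i)

/-- The bound `|⟪r, h⟫| ≤ R ‖B h‖`, where `‖B h‖` is the root mean square of the `‖B i h‖`. By
Riesz representation it expresses that `r` satisfies the source condition `r = B† v` with
`‖v‖ ≤ R`, but it avoids tracking the source element `v` along an iteration. -/
def SourceBound (B : ∀ i, X →L[ℝ] Y i) (R : ℝ) (r : X) : Prop :=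
  ∀ h, |⟪r, h⟫| ≤ R * √(meanResidualSq B 0 h)

namespace SourceBound

variable {B} {R S : ℝ} {r s : X}

theorem zero : SourceBound B 0 0 := by simp [SourceBound]

theorem mono (hr : SourceBound B R r) (hRS : R ≤ S) : SourceBound B S r :=
  fun h => (hr h).trans (by gcongr)

theorem add (hr : SourceBound B R r) (hs : SourceBound B S s) : SourceBound B (R + S) (r + s) := by
  intro h
  rw [inner_add_left, add_mul]
  exact (abs_add_le _ _).trans (add_le_add (hr h) (hs h))

theorem smul (c : ℝ) (hr : SourceBound B R r) : SourceBound B (|c| * R) (c • r) := by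
  intro h
  rw [real_inner_smul_left, abs_mul, mul_assoc]
  exact mul_le_mul_of_nonneg_left (hr h) (abs_nonneg c)

theorem sub (hr : SourceBound B R r) (hs : SourceBound B S s) : SourceBound B (R + S) (r - s) := by
  simpa [sub_eq_add_neg] using hr.add (hs.smul (-1))

theorem convex_setOf : Convex ℝ {r | SourceBound B R r} := by
  intro r hr s hs a b ha hb hab
  refine ((SourceBound.smul a hr).add (SourceBound.smul b hs)).mono (le_of_eq ?_)
  rw [abs_of_nonneg ha, abs_of_nonneg hb, ← add_mul, hab, one_mul]

theorem norm_sq_le (hr : SourceBound B R r) : ‖r‖ ^ 2 ≤ R * √(meanResidualSq B 0 r) := by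
  rw [← real_inner_self_eq_norm_sq]
  exact (le_abs_self _).trans (hr r)

variable [CompleteSpace X] [∀ i, CompleteSpace (Y i)]

theorem adjoint_apply (i : ι) (z : Y i) :
    SourceBound B (√(Fintype.card ι) * ‖z‖) ((B i).adjoint z) := by
  intro h
  rw [ContinuousLinearMap.adjoint_inner_left]
  calc |⟪z, B i h⟫| ≤ ‖z‖ * ‖B i h‖ := abs_real_inner_le_norm _ _
    _ ≤ ‖z‖ * √(Fintype.card ι * meanResidualSq B 0 h) := by
        gcongr
        exact Real.le_sqrt_of_sq_le (norm_apply_sq_le_card_mul_meanResidualSq B h i)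
    _ = √(Fintype.card ι) * ‖z‖ * √(meanResidualSq B 0 h) := by
        rw [Real.sqrt_mul (Nat.cast_nonneg _)]
        ring

theorem adjoint_apply_apply (i : ι) (e : X) :
    SourceBound B (Fintype.card ι * √(meanResidualSq B 0 e)) ((B i).adjoint (B i e)) := by
  refine (adjoint_apply i (B i e)).mono ?_
  calc √(Fintype.card ι) * ‖B i e‖
      ≤ √(Fintype.card ι) * √(Fintype.card ι * meanResidualSq B 0 e) := by
        gcongr
        exact Real.le_sqrt_of_sq_le (norm_apply_sq_le_card_mul_meanResidualSq B e i)
    _ = Fintype.card ι * √(meanResidualSq B 0 e) := by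
        rw [Real.sqrt_mul (Nat.cast_nonneg _), ← mul_assoc, Real.mul_self_sqrt (Nat.cast_nonneg _)]

theorem exists_of_mem_iSup_range_adjoint (hr : r ∈ ⨆ i, (B i).adjoint.range) :
    ∃ R, SourceBound B R r := by
  refine Submodule.iSup_induction _ (motive := fun r => ∃ R, SourceBound B R r) hr ?_ ⟨0, zero⟩ ?_
  · rintro i _ ⟨z, rfl⟩
    exact ⟨_, adjoint_apply i z⟩
  · rintro r s ⟨R, hR⟩ ⟨S, hS⟩
    exact ⟨_, hR.add hS⟩

end SourceBound

end Residual

theorem orthogonal_iInf_ker_eq_topologicalClosure [CompleteSpace X] [∀ i, CompleteSpace (Y i)]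
    (B : ∀ i, X →L[ℝ] Y i) :
    (⨅ i, (B i).ker)ᗮ = (⨆ i, (B i).adjoint.range).topologicalClosure := by
  simp only [← Submodule.orthogonal_orthogonal_eq_closure, ← Submodule.iInf_orthogonal,
    ContinuousLinearMap.orthogonal_range, ContinuousLinearMap.adjoint_adjoint]

theorem mem_orthogonal_of_forall_norm_le_norm_sub {K : Submodule ℝ X} {u : X}
    (hmin : ∀ k ∈ K, ‖u‖ ≤ ‖u - k‖) : u ∈ Kᗮ := by
  rw [Submodule.mem_orthogonal']
  have hinf : ‖u - 0‖ = ⨅ k : (K : Set X), ‖u - k‖ :=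
    le_antisymm (le_ciInf fun k => by simpa using hmin k k.2)
      (ciInf_le ⟨0, Set.forall_mem_range.2 fun _ => norm_nonneg _⟩ (⟨0, K.zero_mem⟩ : (K : Set X)))
  simpa using (K.norm_eq_iInf_iff_real_inner_eq_zero K.zero_mem).1 hinf

/-- The gradient of half the squared residual of the `i`-th equation. -/
noncomputable def residualGradient [CompleteSpace X] [∀ i, CompleteSpace (Y i)]
    (B : ∀ i, X →L[ℝ] Y i) (ξ : ∀ i, Y i) (i : ι) (e : X) : X :=
  (B i).adjoint (B i e - ξ i)

theorem two_mul_inner_le_add_mul_norm_sq {κ : ℝ} (hκ : 0 < κ) (x y : X) :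
    2 * ⟪x, y⟫ ≤ κ * ‖x‖ ^ 2 + κ⁻¹ * ‖y‖ ^ 2 :=
  calc 2 * ⟪x, y⟫ ≤ 2 * ‖x‖ * ‖y‖ := by
        rw [mul_assoc]
        gcongr
        exact real_inner_le_norm x y
    _ ≤ κ * ‖x‖ ^ 2 + κ⁻¹ * ‖y‖ ^ 2 := two_mul_le_add_mul_sq hκ

section Adjoint

variable [CompleteSpace X] [CompleteSpace Z] (T : X →L[ℝ] Z)

theorem norm_sub_adjoint_apply_sq_le (w : X) (r : Z) :
    ‖w - T.adjoint r‖ ^ 2 ≤ ‖w‖ ^ 2 - 2 * ⟪T w, r⟫ + ‖T‖ ^ 2 * ‖r‖ ^ 2 := by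
  rw [norm_sub_sq_real, ContinuousLinearMap.adjoint_inner_right, ← mul_pow,
    ← LinearIsometryEquiv.norm_map ContinuousLinearMap.adjoint T]
  gcongr
  exact T.adjoint.le_opNorm r

-- For `a = n` the residual terms telescope: the left one carries the weight of step `n + 1`.
theorem norm_extrapolation_sub_adjoint_sq_le {κ : ℝ} (hκ : 0 < κ) (hT : ‖T‖ ^ 2 + 2 * κ ≤ 1)
    (ζ : Z) (e e' : X) {a : ℝ} (ha : 0 ≤ a) :
    ‖e + a • (e - e') - T.adjoint (T e - ζ)‖ ^ 2 + (a + 1 + κ) * ‖T e - ζ‖ ^ 2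
      ≤ ‖e + a • (e - e')‖ ^ 2 + a * ‖T e' - ζ‖ ^ 2 + κ⁻¹ * ‖ζ‖ ^ 2 := by
  set r := T e - ζ with hr
  set r' := T e' - ζ with hr'
  have hstep := norm_sub_adjoint_apply_sq_le T (e + a • (e - e')) r
  have hT_extrapolation : T (e + a • (e - e')) = r + ζ + a • (r - r') := by
    simp only [hr, hr', map_add, map_smul, map_sub]
    module
  clear_value r r'
  have hinner : ⟪T (e + a • (e - e')), r⟫ = ‖r‖ ^ 2 + ⟪r, ζ⟫ + a * (‖r‖ ^ 2 - ⟪r', r⟫) := by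
    rw [hT_extrapolation, inner_add_left, inner_add_left, real_inner_smul_left, inner_sub_left,
      real_inner_self_eq_norm_sq, real_inner_comm r ζ]
  have hnoise : 2 * -⟪r, ζ⟫ ≤ κ * ‖r‖ ^ 2 + κ⁻¹ * ‖ζ‖ ^ 2 := by
    simpa only [inner_neg_right, norm_neg] using two_mul_inner_le_add_mul_norm_sq hκ r (-ζ)
  have hpolar : a * (2 * ⟪r', r⟫) ≤ a * (‖r'‖ ^ 2 + ‖r‖ ^ 2) := by
    gcongr
    simpa using two_mul_inner_le_add_mul_norm_sq one_pos r' r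
  have hnorm : ‖T‖ ^ 2 * ‖r‖ ^ 2 ≤ (1 - 2 * κ) * ‖r‖ ^ 2 := by
    gcongr
    linarith
  rw [hinner] at hstep
  linarith

end Adjoint

section Energy

variable [CompleteSpace X] [∀ i, CompleteSpace (Y i)] (B : ∀ i, X →L[ℝ] Y i)

theorem residualGradient_zero (i : ι) (e : X) :
    residualGradient B (0 : ∀ i, Y i) i e = (B i).adjoint (B i e) := by
  simp only [residualGradient, Pi.zero_apply, sub_zero]

theorem residualGradient_add (ξ ζ : ∀ i, Y i) (i : ι) (x y : X) :
    residualGradient B (ξ + ζ) i (x + y) = residualGradient B ξ i x + residualGradient B ζ i y := by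
  simp only [residualGradient, ← map_add, Pi.add_apply]
  congr 1
  rw [map_add]
  abel

theorem residualGradient_sqrt_smul {η : ι → ℝ} (hη : ∀ i, 0 ≤ η i) (ξ : ∀ i, Y i) (i : ι) (e : X) :
    residualGradient (fun i => √(η i) • B i) (fun i => √(η i) • ξ i) i e
      = η i • (B i).adjoint (B i e - ξ i) := by
  simp only [residualGradient, map_smulₛₗ, smul_apply, ← smul_sub, smul_smul, conj_trivial,
    RingHom.id_apply, Real.mul_self_sqrt (hη i)]

theorem sub_eq_heavyBall_residualGradient {A : ∀ i, X →L[ℝ] Y i} {η : ι → ℝ} (hη : ∀ i, 0 ≤ η i)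
    {z : ∀ i, Y i} {ω : ℕ → ι} {x : ℕ → X} (xdag : X)
    (hx : ∀ n : ℕ, x (n + 1) = x n
      - (((n : ℝ) + 2)⁻¹ * η (ω n)) • (A (ω n)).adjoint (A (ω n) (x n) - z (ω n))
      + ((n : ℝ) / ((n : ℝ) + 2)) • (x n - x (n - 1))) (n : ℕ) :
    x n - xdag = heavyBall (residualGradient (fun i => √(η i) • A i)
      fun i => √(η i) • (z i - A i xdag)) (x 0 - xdag) ω n := by
  refine eq_heavyBall (x := fun n => x n - xdag) (fun n => ?_) n
  rw [residualGradient_sqrt_smul A hη, hx, map_sub (A _), sub_sub_sub_cancel_right]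
  module

variable [Fintype ι] (ξ : ∀ i, Y i) (e₀ : X)

theorem sourceBound_heavyBall {B : ∀ i, X →L[ℝ] Y i} {R : ℝ} {r : X} (hr : SourceBound B R r)
    (ω : ℕ → ι) (n : ℕ) :
    SourceBound B (R + Fintype.card ι * ∑ k ∈ Finset.range n,
        √(meanResidualSq B 0 (heavyBall (residualGradient B 0) r ω k)))
      (heavyBall (residualGradient B 0) r ω n) ∧
    SourceBound B (R + Fintype.card ι * ∑ k ∈ Finset.range n,
        √(meanResidualSq B 0 (heavyBall (residualGradient B 0) r ω k)))
      (heavyBallExtrapolation (residualGradient B 0) r ω n) := by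
  induction n with
  | zero => simpa [heavyBallExtrapolation_zero, heavyBall] using hr
  | succ n ih =>
    have hextrapolation := ih.2.sub
      (SourceBound.adjoint_apply_apply (ω n) (heavyBall (residualGradient B 0) r ω n))
    rw [← residualGradient_zero B, ← heavyBallExtrapolation_succ] at hextrapolation
    rw [Finset.sum_range_succ, mul_add, ← add_assoc, heavyBall_succ_eq_convexComb]
    exact ⟨SourceBound.convex_setOf (ih.1.mono (le_add_of_nonneg_right (by positivity)))
      hextrapolation (by positivity) (by positivity) (by field), hextrapolation⟩

/-- The Lyapunov function `‖w_n‖² + n ρ(x_{n-1})` of the iteration, where `w_n` is the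
extrapolated sequence and `ρ` the mean squared residual. -/
noncomputable def heavyBallEnergy (ω : ℕ → ι) (n : ℕ) : ℝ :=
  ‖heavyBallExtrapolation (residualGradient B ξ) e₀ ω n‖ ^ 2
    + n * meanResidualSq B ξ (heavyBall (residualGradient B ξ) e₀ ω (n - 1))

theorem norm_extrapolation_sq_le_heavyBallEnergy (ω : ℕ → ι) (n : ℕ) :
    ‖heavyBallExtrapolation (residualGradient B ξ) e₀ ω n‖ ^ 2 ≤ heavyBallEnergy B ξ e₀ ω n :=
  le_add_of_nonneg_right (mul_nonneg n.cast_nonneg (meanResidualSq_nonneg _ _ _))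

theorem succ_mul_meanResidualSq_le_heavyBallEnergy (ω : ℕ → ι) (n : ℕ) :
    ((n : ℝ) + 1) * meanResidualSq B ξ (heavyBall (residualGradient B ξ) e₀ ω n)
      ≤ heavyBallEnergy B ξ e₀ ω (n + 1) := by
  rw [heavyBallEnergy, Nat.add_sub_cancel, Nat.cast_add_one]
  exact le_add_of_nonneg_left (sq_nonneg _)

theorem heavyBallEnergy_nonneg (ω : ℕ → ι) (n : ℕ) : 0 ≤ heavyBallEnergy B ξ e₀ ω n :=
  (sq_nonneg _).trans (norm_extrapolation_sq_le_heavyBallEnergy B ξ e₀ ω n)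

theorem heavyBallEnergy_update_succ (ω : ℕ → ι) (n : ℕ) (i : ι) :
    heavyBallEnergy B ξ e₀ (Function.update ω n i) (n + 1)
      = ‖heavyBallExtrapolation (residualGradient B ξ) e₀ ω n
            - residualGradient B ξ i (heavyBall (residualGradient B ξ) e₀ ω n)‖ ^ 2
        + ((n : ℝ) + 1) * meanResidualSq B ξ (heavyBall (residualGradient B ξ) e₀ ω n) := by
  rw [heavyBallEnergy, heavyBallExtrapolation_succ]
  simp only [heavyBallExtrapolation, heavyBall_update_of_le _ _ ω le_rfl,
    heavyBall_update_of_le _ _ ω (Nat.sub_le n 1),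
    Function.update_self, Nat.add_sub_cancel, Nat.cast_add_one]

variable {B} {κ : ℝ}

theorem norm_sq_heavyBall_succ_le (ω : ℕ → ι) (n : ℕ) :
    ‖heavyBall (residualGradient B ξ) e₀ ω (n + 1)‖ ^ 2
      ≤ ((n : ℝ) + 1) / ((n : ℝ) + 2) * ‖heavyBall (residualGradient B ξ) e₀ ω n‖ ^ 2
        + 1 / ((n : ℝ) + 2) * heavyBallEnergy B ξ e₀ ω (n + 1) := by
  have hconvex : ConvexOn ℝ Set.univ ((norm : X → ℝ) ^ 2) :=
    convexOn_univ_norm.pow (fun _ _ => norm_nonneg _) 2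
  rw [heavyBall_succ_eq_convexComb]
  refine (hconvex.2 trivial trivial (by positivity) (by positivity) (by field)).trans ?_
  simp only [Pi.pow_apply, smul_eq_mul]
  gcongr
  exact norm_extrapolation_sq_le_heavyBallEnergy B ξ e₀ ω (n + 1)

theorem expect_heavyBallEnergy_update_succ_le [Nonempty ι] (hκ : 0 < κ)
    (hB : ∀ i, ‖B i‖ ^ 2 + 2 * κ ≤ 1) (ω : ℕ → ι) (n : ℕ) :
    𝔼 i, heavyBallEnergy B ξ e₀ (Function.update ω n i) (n + 1)
        + κ * meanResidualSq B ξ (heavyBall (residualGradient B ξ) e₀ ω n)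
      ≤ heavyBallEnergy B ξ e₀ ω n + κ⁻¹ * 𝔼 i, ‖ξ i‖ ^ 2 := by
  have hstep := Finset.expect_le_expect fun i (_ : i ∈ Finset.univ) =>
    norm_extrapolation_sub_adjoint_sq_le (B i) hκ (hB i) (ξ i)
      (heavyBall (residualGradient B ξ) e₀ ω n) (heavyBall (residualGradient B ξ) e₀ ω (n - 1))
      n.cast_nonneg
  simp only [heavyBallEnergy_update_succ]
  simp only [Finset.expect_add_distrib, ← Finset.mul_expect, Fintype.expect_const,
    meanResidualSq, heavyBallEnergy, heavyBallExtrapolation, residualGradient] at hstep ⊢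
  linarith

end Energy

theorem norm_sqrt_smul_sq_lt_one {T : X →L[ℝ] Z} {c : ℝ} (hc : 0 < c) (hcT : c < 1 / ‖T‖ ^ 2) :
    ‖√c • T‖ ^ 2 < 1 := by
  rw [norm_smul, mul_pow, Real.norm_of_nonneg (Real.sqrt_nonneg c), Real.sq_sqrt hc.le]
  exact (lt_div_iff₀ (one_div_pos.1 (hc.trans hcT))).1 hcT

theorem iInf_ker_sqrt_smul (A : ∀ i, X →L[ℝ] Y i) {η : ι → ℝ} (hη : ∀ i, 0 < η i) :
    ⨅ i, (√(η i) • A i).ker = ⨅ i, (A i).ker := by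
  refine iInf_congr fun i => ?_
  ext x
  simp [(Real.sqrt_pos.2 (hη i)).ne']

theorem exists_pos_forall_add_two_mul_le_one [Finite ι] {a : ι → ℝ} (ha : ∀ i, a i < 1) :
    ∃ κ > 0, ∀ i, a i + 2 * κ ≤ 1 := by
  cases isEmpty_or_nonempty ι with
  | inl _ => exact ⟨1, one_pos, isEmptyElim⟩
  | inr _ =>
    obtain ⟨j, hj⟩ := Finite.exists_max a
    exact ⟨(1 - a j) / 2, by linarith [ha j], fun i => by linarith [hj i]⟩

theorem expect_norm_sqrt_smul_sq_le [Fintype ι] {η : ι → ℝ} (hη : ∀ i, 0 ≤ η i) (ζ : ∀ i, Y i) :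
    𝔼 i, ‖√(η i) • ζ i‖ ^ 2 ≤ (𝔼 i, η i) * ∑ i, ‖ζ i‖ ^ 2 := by
  rw [Finset.expect_mul]
  refine Finset.expect_le_expect fun i _ => ?_
  rw [norm_smul, mul_pow, Real.norm_of_nonneg (Real.sqrt_nonneg _), Real.sq_sqrt (hη i)]
  exact mul_le_mul_of_nonneg_left (Finset.single_le_sum (f := fun i => ‖ζ i‖ ^ 2)
    (fun _ _ => sq_nonneg _) (Finset.mem_univ i)) (hη i)

theorem tendsto_mul_expect_norm_sqrt_smul_sq [Fintype ι] {η : ι → ℝ} (hη : ∀ i, 0 ≤ η i)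
    {α : Type*} {l : Filter α} {ζ : α → ∀ i, Y i} {N : α → ℕ} {δ : α → ℝ}
    (hζ : ∀ᶠ a in l, ∑ i, ‖ζ a i‖ ^ 2 ≤ δ a ^ 2)
    (hN : Tendsto (fun a => δ a ^ 2 * N a) l (𝓝 0)) :
    Tendsto (fun a => N a * 𝔼 i, ‖√(η i) • ζ a i‖ ^ 2) l (𝓝 0) := by
  have hη_mean : 0 ≤ 𝔼 i, η i := Finset.expect_nonneg fun i _ => hη i
  refine squeeze_zero' (.of_forall fun a => mul_nonneg (N a).cast_nonneg
    (Finset.expect_nonneg fun _ _ => sq_nonneg _)) ?_ (by simpa using hN.const_mul (𝔼 i, η i))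
  filter_upwards [hζ] with a ha
  calc N a * 𝔼 i, ‖√(η i) • ζ a i‖ ^ 2
      ≤ N a * ((𝔼 i, η i) * δ a ^ 2) := by
        gcongr
        exact (expect_norm_sqrt_smul_sq_le hη (ζ a)).trans (by gcongr)
    _ = (𝔼 i, η i) * (δ a ^ 2 * N a) := by ring

section Convergence

variable [CompleteSpace X] {p : ℕ} (hp : 0 < p) {Y : Fin p → Type*}
  [∀ i, NormedAddCommGroup (Y i)] [∀ i, InnerProductSpace ℝ (Y i)] [∀ i, CompleteSpace (Y i)]

/-- The expectation of the mean squared residual after `n` steps of the stochastic iteration. -/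
noncomputable def expectedResidualSq (B : ∀ i, X →L[ℝ] Y i) (ξ : ∀ i, Y i) (e₀ : X) (n : ℕ) : ℝ :=
  avg p hp n fun ω => meanResidualSq B ξ (heavyBall (residualGradient B ξ) e₀ ω n)

theorem expectedResidualSq_nonneg (B : ∀ i, X →L[ℝ] Y i) (ξ : ∀ i, Y i) (e₀ : X) (n : ℕ) :
    0 ≤ expectedResidualSq hp B ξ e₀ n :=
  avg_nonneg fun _ => meanResidualSq_nonneg _ _ _

variable {B : ∀ i, X →L[ℝ] Y i}

theorem avg_norm_sq_heavyBall_le_of_sourceBound {R : ℝ} (hR : 0 ≤ R) {r : X}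
    (hr : SourceBound B R r) (n : ℕ) :
    avg p hp n (fun ω => ‖heavyBall (residualGradient B 0) r ω n‖ ^ 2)
      ≤ (R + p * ∑ k ∈ Finset.range n, √(expectedResidualSq hp B 0 r k))
        * √(expectedResidualSq hp B 0 r n) := by
  let ρ (k : ℕ) (ω : ℕ → Fin p) : ℝ := meanResidualSq B 0 (heavyBall (residualGradient B 0) r ω k)
  have hρ (k : ℕ) (ω : ℕ → Fin p) : 0 ≤ ρ k ω := meanResidualSq_nonneg _ _ _
  have havg {k : ℕ} (hk : k ≤ n) : avg p hp n (ρ k) = expectedResidualSq hp B 0 r k :=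
    avg_comp_heavyBall_of_le r (residualGradient B 0) (meanResidualSq B 0) hk
  have hpath (ω : ℕ → Fin p) : ‖heavyBall (residualGradient B 0) r ω n‖ ^ 2
      ≤ R * √(ρ n ω) + p * ∑ k ∈ Finset.range n, √(ρ k ω) * √(ρ n ω) := by
    rw [← Finset.sum_mul, ← mul_assoc, ← add_mul]
    simpa only [Fintype.card_fin] using (sourceBound_heavyBall hr ω n).1.norm_sq_le
  have hcross {k : ℕ} (hk : k ∈ Finset.range n) : avg p hp n (fun ω => √(ρ k ω) * √(ρ n ω))
      ≤ √(expectedResidualSq hp B 0 r k) * √(expectedResidualSq hp B 0 r n) := by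
    rw [← havg (Finset.mem_range.1 hk).le, ← havg le_rfl]
    exact avg_sqrt_mul_sqrt_le (hρ k) (hρ n)
  have hlast : avg p hp n (fun ω => √(ρ n ω)) ≤ √(expectedResidualSq hp B 0 r n) :=
    havg le_rfl ▸ avg_sqrt_le (hρ n)
  calc avg p hp n (fun ω => ‖heavyBall (residualGradient B 0) r ω n‖ ^ 2)
      ≤ R * avg p hp n (fun ω => √(ρ n ω))
          + p * ∑ k ∈ Finset.range n, avg p hp n (fun ω => √(ρ k ω) * √(ρ n ω)) := by
        rw [← avg_sum, ← avg_const_mul, ← avg_const_mul, ← avg_add]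
        exact avg_mono hpath
    _ ≤ R * √(expectedResidualSq hp B 0 r n) + p * ∑ k ∈ Finset.range n,
          √(expectedResidualSq hp B 0 r k) * √(expectedResidualSq hp B 0 r n) := by
        gcongr with k hk
        exact hcross hk
    _ = _ := by rw [← Finset.sum_mul, ← mul_assoc, ← add_mul]

section Stability

variable {κ : ℝ} (hκ : 0 < κ) (hB : ∀ i, ‖B i‖ ^ 2 + 2 * κ ≤ 1)
include hκ hB

theorem avg_heavyBallEnergy_succ_le (ξ : ∀ i, Y i) (e₀ : X) (n : ℕ) :
    avg p hp (n + 1) (fun ω => heavyBallEnergy B ξ e₀ ω (n + 1))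
        + κ * expectedResidualSq hp B ξ e₀ n
      ≤ avg p hp n (fun ω => heavyBallEnergy B ξ e₀ ω n) + κ⁻¹ * 𝔼 i, ‖ξ i‖ ^ 2 := by
  have : Nonempty (Fin p) := ⟨⟨0, hp⟩⟩
  rw [avg_succ, expectedResidualSq, ← avg_const_mul, ← avg_add,
    ← avg_const (hp := hp) (m := n) (κ⁻¹ * 𝔼 i, ‖ξ i‖ ^ 2), ← avg_add]
  exact avg_mono fun ω => expect_heavyBallEnergy_update_succ_le ξ e₀ hκ hB ω n

theorem avg_heavyBallEnergy_add_sum_le (ξ : ∀ i, Y i) (e₀ : X) (n : ℕ) :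
    avg p hp n (fun ω => heavyBallEnergy B ξ e₀ ω n)
        + κ * ∑ k ∈ Finset.range n, expectedResidualSq hp B ξ e₀ k
      ≤ ‖e₀‖ ^ 2 + n * (κ⁻¹ * 𝔼 i, ‖ξ i‖ ^ 2) := by
  induction n with
  | zero => simp [avg_zero, heavyBallEnergy, heavyBallExtrapolation_zero]
  | succ n ih =>
    rw [Finset.sum_range_succ, Nat.cast_add_one]
    linarith [avg_heavyBallEnergy_succ_le hp hκ hB ξ e₀ n]

theorem avg_heavyBallEnergy_le (ξ : ∀ i, Y i) (e₀ : X) (n : ℕ) :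
    avg p hp n (fun ω => heavyBallEnergy B ξ e₀ ω n)
      ≤ ‖e₀‖ ^ 2 + n * (κ⁻¹ * 𝔼 i, ‖ξ i‖ ^ 2) :=
  (le_add_of_nonneg_right (mul_nonneg hκ.le (Finset.sum_nonneg fun k _ =>
    expectedResidualSq_nonneg hp B ξ e₀ k))).trans
    (avg_heavyBallEnergy_add_sum_le hp hκ hB ξ e₀ n)

theorem avg_norm_sq_heavyBall_le (ξ : ∀ i, Y i) (e₀ : X) (n : ℕ) :
    avg p hp n (fun ω => ‖heavyBall (residualGradient B ξ) e₀ ω n‖ ^ 2)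
      ≤ ‖e₀‖ ^ 2 + n * (κ⁻¹ * 𝔼 i, ‖ξ i‖ ^ 2) := by
  induction n with
  | zero => simp [avg_zero, heavyBall]
  | succ n ih =>
    set c := κ⁻¹ * 𝔼 i, ‖ξ i‖ ^ 2
    have : 0 ≤ c :=
      mul_nonneg (inv_nonneg.2 hκ.le) (Finset.expect_nonneg fun _ _ => sq_nonneg _)
    calc avg p hp (n + 1) (fun ω => ‖heavyBall (residualGradient B ξ) e₀ ω (n + 1)‖ ^ 2)
        ≤ ((n : ℝ) + 1) / ((n : ℝ) + 2)
              * avg p hp n (fun ω => ‖heavyBall (residualGradient B ξ) e₀ ω n‖ ^ 2)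
            + 1 / ((n : ℝ) + 2)
              * avg p hp (n + 1) (fun ω => heavyBallEnergy B ξ e₀ ω (n + 1)) := by
          rw [← avg_comp_heavyBall_of_le e₀ (residualGradient B ξ) (‖·‖ ^ 2) n.le_succ,
            ← avg_const_mul, ← avg_const_mul, ← avg_add]
          exact avg_mono fun ω => norm_sq_heavyBall_succ_le ξ e₀ ω n
      _ ≤ ((n : ℝ) + 1) / ((n : ℝ) + 2) * (‖e₀‖ ^ 2 + ((n + 1 : ℕ) : ℝ) * c)
            + 1 / ((n : ℝ) + 2) * (‖e₀‖ ^ 2 + ((n + 1 : ℕ) : ℝ) * c) := by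
          gcongr
          · exact ih.trans (by gcongr; exact n.le_succ)
          · exact avg_heavyBallEnergy_le hp hκ hB ξ e₀ (n + 1)
      _ = ‖e₀‖ ^ 2 + ((n + 1 : ℕ) : ℝ) * c := by field

theorem succ_mul_expectedResidualSq_le (e₀ : X) (n : ℕ) :
    ((n : ℝ) + 1) * expectedResidualSq hp B 0 e₀ n ≤ ‖e₀‖ ^ 2 := by
  calc ((n : ℝ) + 1) * expectedResidualSq hp B 0 e₀ n
      = avg p hp (n + 1) (fun ω => ((n : ℝ) + 1)
          * meanResidualSq B 0 (heavyBall (residualGradient B 0) e₀ ω n)) := by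
        rw [expectedResidualSq, avg_const_mul, avg_comp_heavyBall_of_le e₀ (residualGradient B 0)
          (meanResidualSq B 0) n.le_succ]
    _ ≤ avg p hp (n + 1) (fun ω => heavyBallEnergy B 0 e₀ ω (n + 1)) :=
        avg_mono fun ω => succ_mul_meanResidualSq_le_heavyBallEnergy B 0 e₀ ω n
    _ ≤ ‖e₀‖ ^ 2 := by simpa using avg_heavyBallEnergy_le hp hκ hB 0 e₀ (n + 1)

theorem sqrt_expectedResidualSq_le (e₀ : X) {n : ℕ} (hn : 0 < n) :
    √(expectedResidualSq hp B 0 e₀ n) ≤ ‖e₀‖ / √n := by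
  rw [Real.sqrt_le_left (by positivity), div_pow, Real.sq_sqrt n.cast_nonneg,
    le_div_iff₀' (by positivity)]
  linarith [succ_mul_expectedResidualSq_le hp hκ hB e₀ n, expectedResidualSq_nonneg hp B 0 e₀ n]

theorem summable_expectedResidualSq (e₀ : X) : Summable (expectedResidualSq hp B 0 e₀) := by
  refine summable_of_sum_range_le (c := κ⁻¹ * ‖e₀‖ ^ 2)
    (expectedResidualSq_nonneg hp B 0 e₀) fun n => ?_
  rw [le_inv_mul_iff₀ hκ]
  have henergy : 0 ≤ avg p hp n (fun ω => heavyBallEnergy B 0 e₀ ω n) :=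
    avg_nonneg fun ω => heavyBallEnergy_nonneg B 0 e₀ ω n
  exact (le_add_of_nonneg_left henergy).trans
    (by simpa using avg_heavyBallEnergy_add_sum_le hp hκ hB 0 e₀ n)

theorem tendsto_avg_norm_sq_heavyBall_of_sourceBound {R : ℝ} {r : X} (hr : SourceBound B R r) :
    Tendsto (fun n => avg p hp n fun ω => ‖heavyBall (residualGradient B 0) r ω n‖ ^ 2)
      atTop (𝓝 0) := by
  wlog hR : 0 ≤ R generalizing R
  · exact this (hr.mono (le_abs_self R)) (abs_nonneg R)
  set a := expectedResidualSq hp B 0 r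
  have hbound : Tendsto (fun n : ℕ => (R / √n + p * ((∑ k ∈ Finset.range n, √(a k)) / √n)) * ‖r‖)
      atTop (𝓝 0) := by
    have hR : Tendsto (fun n : ℕ => R / √n) atTop (𝓝 0) :=
      tendsto_const_nhds.div_atTop (Real.tendsto_sqrt_atTop.comp tendsto_natCast_atTop_atTop)
    simpa using (hR.add ((tendsto_sum_sqrt_div_sqrt_atTop (expectedResidualSq_nonneg hp B 0 r)
      (summable_expectedResidualSq hp hκ hB r)).const_mul (p : ℝ))).mul_const ‖r‖
  refine squeeze_zero' (.of_forall fun n => avg_nonneg fun _ => sq_nonneg _) ?_ hbound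
  filter_upwards [eventually_gt_atTop 0] with n hn
  calc avg p hp n (fun ω => ‖heavyBall (residualGradient B 0) r ω n‖ ^ 2)
      ≤ (R + p * ∑ k ∈ Finset.range n, √(a k)) * √(a n) :=
        avg_norm_sq_heavyBall_le_of_sourceBound hp hR hr n
    _ ≤ (R + p * ∑ k ∈ Finset.range n, √(a k)) * (‖r‖ / √n) := by
        gcongr
        exact sqrt_expectedResidualSq_le hp hκ hB r hn
    _ = (R / √n + p * ((∑ k ∈ Finset.range n, √(a k)) / √n)) * ‖r‖ := by ring

theorem avg_norm_sq_heavyBall_add_le (ξ : ∀ i, Y i) (r s : X) (n : ℕ) :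
    avg p hp n (fun ω => ‖heavyBall (residualGradient B ξ) (r + s) ω n‖ ^ 2)
      ≤ 2 * avg p hp n (fun ω => ‖heavyBall (residualGradient B 0) r ω n‖ ^ 2)
        + 2 * (‖s‖ ^ 2 + n * (κ⁻¹ * 𝔼 i, ‖ξ i‖ ^ 2)) := by
  have hsplit (ω : ℕ → Fin p) := heavyBall_add (ω := ω)
    (fun i x y => zero_add ξ ▸ residualGradient_add B 0 ξ i x y) r s n
  refine le_trans ?_ (add_le_add_right (mul_le_mul_of_nonneg_left
    (avg_norm_sq_heavyBall_le hp hκ hB ξ s n) zero_le_two) _)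
  rw [← avg_const_mul, ← avg_const_mul, ← avg_add]
  refine avg_mono fun ω => ?_
  rw [hsplit, ← mul_add]
  exact (pow_le_pow_left₀ (norm_nonneg _) (norm_add_le _ _) 2).trans add_sq_le

end Stability

theorem tendsto_avg_norm_sq_heavyBall (hB : ∀ i, ‖B i‖ ^ 2 < 1) {e₀ : X}
    (he₀ : e₀ ∈ (⨅ i, (B i).ker)ᗮ) {α : Type*} {l : Filter α} {ξ : α → ∀ i, Y i} {N : α → ℕ}
    (hN : Tendsto N l atTop) (hξ : Tendsto (fun d => N d * 𝔼 i, ‖ξ d i‖ ^ 2) l (𝓝 0)) :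
    Tendsto (fun d => avg p hp (N d)
      fun ω => ‖heavyBall (residualGradient B (ξ d)) e₀ ω (N d)‖ ^ 2) l (𝓝 0) := by
  obtain ⟨κ, hκ, hBκ⟩ := exists_pos_forall_add_two_mul_le_one hB
  rw [orthogonal_iInf_ker_eq_topologicalClosure] at he₀
  refine tendsto_order.2 ⟨fun b hb => .of_forall fun d =>
    hb.trans_le (avg_nonneg fun _ => sq_nonneg _), fun ε hε => ?_⟩
  obtain ⟨r, hr, hdist⟩ := Metric.mem_closure_iff.1 he₀ √(ε / 4) (by positivity)
  obtain ⟨R, hR⟩ := SourceBound.exists_of_mem_iSup_range_adjoint hr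
  have hremainder : 2 * ‖e₀ - r‖ ^ 2 < ε / 2 := by
    rw [dist_eq_norm, Real.lt_sqrt (norm_nonneg _)] at hdist
    linarith
  have hvanish : Tendsto (fun d =>
      2 * avg p hp (N d) (fun ω => ‖heavyBall (residualGradient B 0) r ω (N d)‖ ^ 2)
        + 2 * κ⁻¹ * (N d * 𝔼 i, ‖ξ d i‖ ^ 2)) l (𝓝 0) := by
    simpa using (((tendsto_avg_norm_sq_heavyBall_of_sourceBound hp hκ hBκ hR).comp hN).const_mul
      2).add (hξ.const_mul (2 * κ⁻¹))
  filter_upwards [hvanish.eventually_lt_const (half_pos hε)] with d hd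
  have hsplit := avg_norm_sq_heavyBall_add_le hp hκ hBκ (ξ d) r (e₀ - r) (N d)
  rw [add_sub_cancel] at hsplit
  linarith

end Convergence

end LeastSquares

/-- **Theorem SHB:thm4 (regularization property).**  Assume `0 < η i < 1/‖A i‖²` and
let `x†` be the `x₀`-minimal norm solution of `A x = y`.  For each noise level `δ > 0`
let `y^δ` be noisy data with `‖y^δ i − y i‖ ≤ δ_i` and total noise level
`δ = (∑ δ_i²)^{1/2}`, let `x^δ` be the corresponding stochastic heavy-ball iterates,
and let the stopping index `n_δ` satisfy `n_δ → ∞` and `δ² n_δ → 0` as `δ → 0`.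
Then `E[‖x^δ_{n_δ} − x†‖²] → 0` as `δ → 0`. -/
theorem stmt_15 {p : ℕ} (hp : 0 < p) {X : Type*} [NormedAddCommGroup X]
    [InnerProductSpace ℝ X] [CompleteSpace X]
    {Y : Fin p → Type*} [∀ i, NormedAddCommGroup (Y i)] [∀ i, InnerProductSpace ℝ (Y i)]
    [∀ i, CompleteSpace (Y i)]
    (A : ∀ i, X →L[ℝ] Y i) (y : ∀ i, Y i)
    (η : Fin p → ℝ) (hη : ∀ i, 0 < η i ∧ η i < 1 / ‖A i‖ ^ 2)
    (x₀ xdag : X)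
    (hdag : ∀ i, (A i) xdag = y i)
    (hmin : ∀ x' : X, (∀ i, (A i) x' = y i) → ‖xdag - x₀‖ ≤ ‖x' - x₀‖)
    -- the family of noisy data, indexed by the total noise level `δ`
    (yδ : ℝ → ∀ i, Y i) (δi : ℝ → Fin p → ℝ)
    (hnoise : ∀ δ > (0 : ℝ), ∀ i, ‖yδ δ i - y i‖ ≤ δi δ i)
    (hlevel : ∀ δ > (0 : ℝ), δ = Real.sqrt (∑ i, (δi δ i) ^ 2))
    -- the corresponding stochastic heavy-ball iterates
    (xδ : ℝ → (ℕ → Fin p) → ℕ → X)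
    (hxδ0 : ∀ δ ω, xδ δ ω 0 = x₀)
    (hxδ : ∀ δ ω, ∀ n : ℕ, xδ δ ω (n + 1) = xδ δ ω n
      - (((n : ℝ) + 2)⁻¹ * η (ω n)) •
          ((A (ω n)).adjoint ((A (ω n)) (xδ δ ω n) - yδ δ (ω n)))
      + ((n : ℝ) / ((n : ℝ) + 2)) • (xδ δ ω n - xδ δ ω (n - 1)))
    -- the stopping index: `n_δ → ∞` and `δ² n_δ → 0` as `δ → 0`
    (nδ : ℝ → ℕ)
    (hn1 : Tendsto nδ (𝓝[>] (0 : ℝ)) atTop)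
    (hn2 : Tendsto (fun δ => δ ^ 2 * (nδ δ : ℝ)) (𝓝[>] (0 : ℝ)) (𝓝 0)) :
    Tendsto (fun δ => avg p hp (nδ δ) (fun ω => ‖xδ δ ω (nδ δ) - xdag‖ ^ 2))
      (𝓝[>] (0 : ℝ)) (𝓝 0) := by
  have hη₀ (i : Fin p) : 0 ≤ η i := (hη i).1.le
  have hB (i : Fin p) : ‖√(η i) • A i‖ ^ 2 < 1 := norm_sqrt_smul_sq_lt_one (hη i).1 (hη i).2
  have he₀ : x₀ - xdag ∈ (⨅ i, (√(η i) • A i).ker)ᗮ := by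
    rw [iInf_ker_sqrt_smul A fun i => (hη i).1]
    refine mem_orthogonal_of_forall_norm_le_norm_sub fun k hk => ?_
    have hsolution : ∀ i, A i (xdag + k) = y i := by simpa [hdag, Submodule.mem_iInf] using hk
    simpa only [norm_sub_rev _ x₀, sub_sub] using hmin (xdag + k) hsolution
  have hdata : ∀ᶠ δ in 𝓝[>] (0 : ℝ), ∑ i, ‖yδ δ i - y i‖ ^ 2 ≤ δ ^ 2 := by
    filter_upwards [self_mem_nhdsWithin] with δ hδ
    rw [← (Real.sqrt_eq_iff_eq_sq (Finset.sum_nonneg fun _ _ => sq_nonneg _) hδ.le).1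
      (hlevel δ hδ).symm]
    gcongr with i
    exact hnoise δ hδ i
  have herror (δ : ℝ) (ω : ℕ → Fin p) (n : ℕ) : xδ δ ω n - xdag = heavyBall (residualGradient
      (fun i => √(η i) • A i) fun i => √(η i) • (yδ δ i - y i)) (x₀ - xdag) ω n := by
    simpa only [hdag, hxδ0] using sub_eq_heavyBall_residualGradient hη₀ xdag (hxδ δ ω) n
  simpa only [herror] using tendsto_avg_norm_sq_heavyBall hp hB he₀ hn1
    (tendsto_mul_expect_norm_sqrt_smul_sq hη₀ hdata hn2)
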